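/- Let u be quasi-definite with SMOP (P_n), Jacobi matrix J, and recurrence coefficients (a_n, b_n); let c ∈ ℂ with P_n(c) ≠ 0 for all n, and suppose ũ = (x−c)u is quasi-definite with recurrence coefficients (ã_n, b̃_n). Assume J − cI = L·U as in the Christoffel LU factorization (L unit lower bidiagonal with subdiagonal ℓ_n = −(P_{n−1}(c)/P_n(c))·(⟨u,P_n²⟩/⟨u,P_{n−1}²⟩), U upper bidiagonal with diagonal β_n = −P_{n+1}(c)/P_n(c) and superdiagonal 1). Let J_α be the Jacobi matrix of the co-recursive sequence (R_n) of parameter α = −a_1·u_0/ũ_0 with respect to u^{(1)} (so J_α has diagonal (b_1+α, b_2, b_3, …), subdiagonal (a_2, a_3, …), superdiagonal 1), and let J̃^{(1)} be the Jacobi matrix with diagonal b̃_{n+1}, subdiagonal ã_{n+2}, superdiagonal 1 (the Jacobi matrix of (P̃^{(1)}_n)). Define L_1 and U_1 by deleting the first row and the first column of L and of U respectively (L_1 unit lower bidiagonal with subdiagonal ℓ_2, ℓ_3, …; U_1 upper bidiagonal with diagonal β_1, β_2, … and superdiagonal 1). Then, entrywise, J_α − cI = L_1·U_1 and J̃^{(1)}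 − cI = U_1·L_1. -/

import Mathlib

open Polynomial

noncomputable section

/-- Apply a linear functional (identified with its moment sequence) to a polynomial:
`⟨u, p⟩ = Σ_k c_k u_k` for `p = Σ_k c_k x^k`. -/
def fapply (u : ℕ → ℂ) (p : Polynomial ℂ) : ℂ := p.sum fun k ck => ck * u k

/-- `P` is the sequence of monic orthogonal polynomials (SMOP) of the functional `u`. -/
def IsSMOP (u : ℕ → ℂ) (P : ℕ → Polynomial ℂ) : Prop :=
  (∀ n, (P n).Monic) ∧ (∀ n, (P n).natDegree = n) ∧
    (∀ n m, n ≠ m → fapply u (P n * P m) = 0) ∧ (∀ n, fapply u (P n * P n) ≠ 0)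

/-- A functional is quasi-definite iff it admits a SMOP. -/
def IsQuasiDefinite (u : ℕ → ℂ) : Prop := ∃ P, IsSMOP u P

/-- Three term recurrence relation `x P_n = P_{n+1} + b_n P_n + a_n P_{n-1}`,
with `P_{-1} = 0`, `P_0 = 1`. -/
def HasTTRR (P : ℕ → Polynomial ℂ) (a b : ℕ → ℂ) : Prop :=
  P 0 = 1 ∧ X * P 0 = P 1 + C (b 0) * P 0 ∧
    ∀ n, 1 ≤ n → X * P n = P (n + 1) + C (b n) * P n + C (a n) * P (n - 1)

/-- Wronskian `W(p,q)(x) = p(x) q'(x) - p'(x) q(x)`. -/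
def Wr (p q : Polynomial ℂ) (x : ℂ) : ℂ :=
  p.eval x * (derivative q).eval x - (derivative p).eval x * q.eval x

/-- The monic Jacobi matrix with diagonal `b`, superdiagonal `1` and subdiagonal
entries `J_{n+1,n} = a_{n+1}`. -/
def jacobi (a b : ℕ → ℂ) (i j : ℕ) : ℂ :=
  if i = j then b i else if j = i + 1 then 1 else if i = j + 1 then a i else 0

/-- Entrywise product of semi-infinite (banded) matrices; the sum has finite support. -/
def mprod (A B : ℕ → ℕ → ℂ) (i j : ℕ) : ℂ := ∑' k, A i k * B k j

/-- `w` is the moment sequence of the inverse functional `u⁻¹`: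
the convolution of the moments of `u` and `w` is `(1,0,0,…)`. -/
def IsInverseMoments (u w : ℕ → ℂ) : Prop :=
  ∀ n, ∑ k ∈ Finset.range (n + 1), u k * w (n - k) = if n = 0 then 1 else 0

/-- Apply a functional `u` to the second (outer) variable `y` of a bivariate polynomial
`D = Σ_k q_k(x) y^k`, giving `Σ_k u_k q_k(x)`. -/
def fapplyY (u : ℕ → ℂ) (D : Polynomial (Polynomial ℂ)) : Polynomial ℂ :=
  D.sum fun k q => u k • q

/-!
The Christoffel formula `(x - c) P̃_n = P_{n+1} + β_n P_n` says that `U` maps `P` to `(x - c) P̃`.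
Feeding it and `J - cI = LU` into the recurrence of `P` and cancelling `x - c` shows that `L` maps
`P̃` to `P`; hence `x - c` acts on `P̃` through `UL`, that is `J̃ - cI = UL`.

The entries of `UL` outside the first row and column do not involve the first row and column of the
factors, so truncating both factors truncates the product. In `LU` the only such entry that does is
the one in position `(1, 1)`, which loses the term `ℓ_1`; and `α = -ℓ_1` because `a_1 = ℓ_1 β_0` and
`ũ_0 = β_0 u_0`.
-/

/-- The linear functional on polynomials with moment sequence `u`: the linear-map version of
`fapply`. -/
def momentFunctional {R : Type*} [CommSemiring R] (u : ℕ → R) : R[X] →ₗ[R] R :=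
  lsum fun k => LinearMap.mulRight R (u k)

lemma momentFunctional_monomial {R : Type*} [CommSemiring R] (u : ℕ → R) (n : ℕ) (r : R) :
    momentFunctional u (monomial n r) = r * u n :=
  sum_monomial_index r _ (zero_mul _)

lemma momentFunctional_X_sub_C_mul {R : Type*} [CommRing R] {u v : ℕ → R} {c : R}
    (hv : ∀ n, v n = u (n + 1) - c * u n) (p : R[X]) :
    momentFunctional u ((X - C c) * p) = momentFunctional v p := by
  induction p using Polynomial.induction_on' with
  | add p q hp hq => rw [mul_add, map_add, map_add, hp, hq]
  | monomial n r =>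
    rw [sub_mul, X_mul_monomial, C_mul_monomial, map_sub]
    simp only [momentFunctional_monomial, hv]
    ring

lemma fapply_eq_momentFunctional (u : ℕ → ℂ) (p : ℂ[X]) :
    fapply u p = momentFunctional u p := rfl

lemma degree_sub_C_coeff_mul_lt {R : Type*} [Ring R] {p q : R[X]} {n : ℕ} (hq : q.Monic)
    (hqn : q.natDegree = n) (hp : p.degree ≤ n) : (p - C (p.coeff n) * q).degree < n := by
  rw [degree_lt_iff_coeff_zero]
  intro m hm
  rcases hm.eq_or_lt with rfl | hlt
  · have hlead : q.coeff n = 1 := hqn ▸ hq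
    simp [hlead]
  · have hpm : p.coeff m = 0 := coeff_eq_zero_of_degree_lt (hp.trans_lt (mod_cast hlt))
    have hqm : q.coeff m = 0 := coeff_eq_zero_of_natDegree_lt (hqn.trans_lt hlt)
    simp [hpm, hqm]

namespace IsSMOP

variable {u : ℕ → ℂ} {P : ℕ → ℂ[X]}

lemma degree_eq (hP : IsSMOP u P) (n : ℕ) : (P n).degree = n := by
  rw [degree_eq_natDegree (hP.1 n).ne_zero, hP.2.1 n]

/-- An SMOP as a `Polynomial.Sequence`, giving access to the library's results on the span and
the linear independence of such sequences. -/
def toSequence (hP : IsSMOP u P) : Polynomial.Sequence ℂ := ⟨P, hP.degree_eq⟩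

lemma linearIndependent (hP : IsSMOP u P) : LinearIndependent ℂ P :=
  hP.toSequence.linearIndependent

lemma momentFunctional_mul_eq_zero_of_ne (hP : IsSMOP u P) {m n : ℕ} (h : m ≠ n) :
    momentFunctional u (P m * P n) = 0 := by
  rw [← fapply_eq_momentFunctional, hP.2.2.1 m n h]

lemma momentFunctional_mul_self_ne_zero (hP : IsSMOP u P) (n : ℕ) :
    momentFunctional u (P n * P n) ≠ 0 := by
  rw [← fapply_eq_momentFunctional]
  exact hP.2.2.2 n

lemma momentFunctional_mul_eq_zero_of_degree_lt (hP : IsSMOP u P) {n : ℕ} {p : ℂ[X]}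
    (hp : p.degree < n) : momentFunctional u (P n * p) = 0 := by
  have hspan : p ∈ Submodule.span ℂ (P '' Set.Iio n) := by
    have h := hP.toSequence.span_degreeLT (m := n) fun i _ =>
      (leadingCoeff_ne_zero.2 (hP.toSequence.ne_zero i)).isUnit
    exact h ▸ mem_degreeLT.2 hp
  have hle : Submodule.span ℂ (P '' Set.Iio n) ≤
      LinearMap.ker (momentFunctional u ∘ₗ LinearMap.mulLeft ℂ (P n)) := by
    rw [Submodule.span_le]
    rintro _ ⟨m, hm, rfl⟩
    exact hP.momentFunctional_mul_eq_zero_of_ne (Set.mem_Iio.1 hm).ne'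
  exact hle hspan

lemma momentFunctional_mul_of_degree_le (hP : IsSMOP u P) {n : ℕ} {p : ℂ[X]}
    (hp : p.degree ≤ n) :
    momentFunctional u (P n * p) = p.coeff n * momentFunctional u (P n * P n) := by
  have hrem := hP.momentFunctional_mul_eq_zero_of_degree_lt
    (degree_sub_C_coeff_mul_lt (hP.1 n) (hP.2.1 n) hp)
  rwa [mul_sub, mul_left_comm, ← smul_eq_C_mul, map_sub, map_smul, smul_eq_mul,
    sub_eq_zero] at hrem

lemma eq_zero_of_degree_lt_of_orthogonal (hP : IsSMOP u P) {n : ℕ} {p : ℂ[X]} (hp : p.degree < n)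
    (horth : ∀ m < n, momentFunctional u (P m * p) = 0) : p = 0 := by
  by_contra hp0
  have hlead := hP.momentFunctional_mul_of_degree_le (degree_le_natDegree (p := p))
  rw [horth _ ((natDegree_lt_iff_degree_lt hp0).2 hp)] at hlead
  exact mul_ne_zero (leadingCoeff_ne_zero.2 hp0) (hP.momentFunctional_mul_self_ne_zero _) hlead.symm

lemma exists_eq_add_C_mul_of_orthogonal (hP : IsSMOP u P) {n : ℕ} {q : ℂ[X]} (hq : q.Monic)
    (hqn : q.natDegree = n + 1) (horth : ∀ m < n, momentFunctional u (P m * q) = 0) :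
    ∃ γ, q = P (n + 1) + C γ * P n := by
  have hdeg : (q - P (n + 1)).degree ≤ n := by
    have h := degree_sub_C_coeff_mul_lt (hP.1 (n + 1)) (hP.2.1 (n + 1))
      (hqn ▸ degree_le_natDegree : q.degree ≤ (n + 1 : ℕ))
    have hlead : q.coeff (n + 1) = 1 := hqn ▸ hq
    rw [hlead, C_1, one_mul] at h
    exact Order.lt_succ_iff.1 h
  refine ⟨(q - P (n + 1)).coeff n, ?_⟩
  rw [← sub_eq_zero, ← sub_sub]
  refine hP.eq_zero_of_degree_lt_of_orthogonal
    (degree_sub_C_coeff_mul_lt (hP.1 n) (hP.2.1 n) hdeg) fun m hm => ?_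
  rw [mul_sub, mul_sub, mul_left_comm, ← smul_eq_C_mul, map_sub, map_sub, map_smul,
    horth m hm, hP.momentFunctional_mul_eq_zero_of_ne (hm.trans n.lt_succ_self).ne,
    hP.momentFunctional_mul_eq_zero_of_ne hm.ne, smul_zero, sub_zero, sub_zero]

theorem christoffel_formula (hP : IsSMOP u P) {v : ℕ → ℂ} {Q : ℕ → ℂ[X]} (hQ : IsSMOP v Q)
    {c : ℂ} (hv : ∀ n, v n = u (n + 1) - c * u n) {n : ℕ} (hc : (P n).eval c ≠ 0) :
    (X - C c) * Q n = P (n + 1) + C (-((P (n + 1)).eval c / (P n).eval c)) * P n := by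
  have hmonic : ((X - C c) * Q n).Monic := (monic_X_sub_C c).mul (hQ.1 n)
  have hdeg : ((X - C c) * Q n).natDegree = n + 1 := by
    rw [(monic_X_sub_C c).natDegree_mul (hQ.1 n), natDegree_X_sub_C, hQ.2.1 n, add_comm]
  have horth : ∀ m < n, momentFunctional u (P m * ((X - C c) * Q n)) = 0 := by
    intro m hm
    rw [mul_left_comm, momentFunctional_X_sub_C_mul hv, mul_comm]
    exact hQ.momentFunctional_mul_eq_zero_of_degree_lt (by rw [hP.degree_eq]; exact_mod_cast hm)
  obtain ⟨γ, hγ⟩ := hP.exists_eq_add_C_mul_of_orthogonal hmonic hdeg horth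
  have hγ_eval : 0 = (P (n + 1)).eval c + γ * (P n).eval c := by
    simpa using congrArg (eval c) hγ
  have hγ_eq : γ = -((P (n + 1)).eval c / (P n).eval c) := by
    rw [← neg_div, eq_div_iff hc]
    linear_combination -hγ_eval
  rw [hγ, hγ_eq]

end IsSMOP

lemma jacobi_congr {a b a' b' : ℕ → ℂ} (ha : ∀ n, a (n + 1) = a' (n + 1)) (hb : ∀ n, b n = b' n) :
    jacobi a b = jacobi a' b' := by
  funext i j
  grind [jacobi]

namespace HasTTRR

variable {P : ℕ → ℂ[X]} {a b a' b' : ℕ → ℂ}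

lemma jacobi_unique (hP : LinearIndependent ℂ P) (h : HasTTRR P a b) (h' : HasTTRR P a' b') :
    jacobi a b = jacobi a' b' := by
  have hb₀ : b 0 = b' 0 := by
    refine C_injective ?_
    have h₀ := h.2.1
    have h₀' := h'.2.1
    rw [h.1, mul_one] at h₀ h₀'
    linear_combination h₀' - h₀
  have hsucc (n : ℕ) : b (n + 1) = b' (n + 1) ∧ a (n + 1) = a' (n + 1) := by
    have hpair : LinearIndependent ℂ ![P (n + 1), P n] := by
      have hinj : Function.Injective ![n + 1, n] := by
        simp [Function.Injective, Fin.forall_fin_two]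
      convert hP.comp _ hinj using 1
      ext i : 1
      fin_cases i <;> rfl
    refine hpair.eq_of_pair ?_
    simp only [smul_eq_C_mul]
    have hn := h.2.2 (n + 1) n.succ_pos
    have hn' := h'.2.2 (n + 1) n.succ_pos
    rw [Nat.add_sub_cancel] at hn hn'
    linear_combination hn' - hn
  refine jacobi_congr (fun n => (hsucc n).2) fun n => ?_
  cases n with
  | zero => exact hb₀
  | succ n => exact (hsucc n).1

lemma moment_one {u : ℕ → ℂ} (h : HasTTRR P a b) (horth : momentFunctional u (P 1 * P 0) = 0) :
    u 1 = b 0 * u 0 := by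
  have hP₁ : P 1 * P 0 = monomial 1 1 - monomial 0 (b 0) := by
    have h₁ := h.2.1
    rw [h.1] at h₁ ⊢
    rw [monomial_one_one_eq_X, monomial_zero_left]
    linear_combination -h₁
  rw [hP₁, map_sub, momentFunctional_monomial, momentFunctional_monomial] at horth
  linear_combination horth

end HasTTRR

/-- The semi-infinite unit lower bidiagonal matrix with entries `ℓ_{i+1}` in position `(i + 1, i)`;
`ℓ 0` is not an entry. -/
def unitLowerBidiagonal (ℓ : ℕ → ℂ) (i j : ℕ) : ℂ :=
  if i = j then 1 else if i = j + 1 then ℓ i else 0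

/-- The semi-infinite upper bidiagonal matrix with diagonal `β` and superdiagonal `1`. -/
def upperBidiagonal (β : ℕ → ℂ) (i j : ℕ) : ℂ :=
  if j = i then β i else if j = i + 1 then 1 else 0

lemma mprod_unitLowerBidiagonal_zero (ℓ : ℕ → ℂ) (B : ℕ → ℕ → ℂ) (j : ℕ) :
    mprod (unitLowerBidiagonal ℓ) B 0 j = B 0 j := by
  unfold mprod
  rw [tsum_eq_single 0 fun k hk => by simp [unitLowerBidiagonal, hk.symm]]
  simp [unitLowerBidiagonal]

lemma mprod_unitLowerBidiagonal_succ (ℓ : ℕ → ℂ) (B : ℕ → ℕ → ℂ) (i j : ℕ) :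
    mprod (unitLowerBidiagonal ℓ) B (i + 1) j = ℓ (i + 1) * B i j + B (i + 1) j := by
  unfold mprod
  rw [tsum_eq_sum (s := {i, i + 1}) fun k hk => by grind [unitLowerBidiagonal],
    Finset.sum_pair i.succ_ne_self.symm]
  simp [unitLowerBidiagonal]

lemma mprod_upperBidiagonal (β : ℕ → ℂ) (B : ℕ → ℕ → ℂ) (i j : ℕ) :
    mprod (upperBidiagonal β) B i j = β i * B i j + B (i + 1) j := by
  unfold mprod
  rw [tsum_eq_sum (s := {i, i + 1}) fun k hk => by grind [upperBidiagonal],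
    Finset.sum_pair i.succ_ne_self.symm]
  simp [upperBidiagonal]

section Bidiagonal

variable {a b ℓ β : ℕ → ℂ} {c : ℂ}

lemma jacobi_sub_eq_lower_mul_upper_iff :
    (∀ i j, (jacobi a b i j - if i = j then c else 0) =
        mprod (unitLowerBidiagonal ℓ) (upperBidiagonal β) i j) ↔
      b 0 = c + β 0 ∧
        ∀ n, b (n + 1) = c + β (n + 1) + ℓ (n + 1) ∧ a (n + 1) = ℓ (n + 1) * β n := by
  constructor
  · intro h
    have hzero := h 0 0
    rw [mprod_unitLowerBidiagonal_zero] at hzero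
    refine ⟨by grind [jacobi, upperBidiagonal], fun n => ?_⟩
    have hdiag := h (n + 1) (n + 1)
    have hsub := h (n + 1) n
    rw [mprod_unitLowerBidiagonal_succ] at hdiag hsub
    constructor <;> grind [jacobi, upperBidiagonal]
  · rintro ⟨hb₀, hsucc⟩ (_ | i) j
    · rw [mprod_unitLowerBidiagonal_zero]
      grind [jacobi, upperBidiagonal]
    · rw [mprod_unitLowerBidiagonal_succ]
      grind [jacobi, upperBidiagonal]

lemma jacobi_sub_eq_upper_mul_lower_iff :
    (∀ i j, (jacobi a b i j - if i = j then c else 0) =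
        mprod (upperBidiagonal β) (unitLowerBidiagonal ℓ) i j) ↔
      ∀ n, b n = c + β n + ℓ (n + 1) ∧ a (n + 1) = ℓ (n + 1) * β (n + 1) := by
  simp only [mprod_upperBidiagonal]
  constructor
  · intro h n
    have hdiag := h n n
    have hsub := h (n + 1) n
    constructor <;> grind [jacobi, unitLowerBidiagonal]
  · intro h i j
    grind [jacobi, unitLowerBidiagonal]

lemma jacobi_tail_sub_eq_lower_mul_upper
    (h : ∀ i j, (jacobi a b i j - if i = j then c else 0) =
      mprod (unitLowerBidiagonal ℓ) (upperBidiagonal β) i j) (i j : ℕ) :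
    (jacobi (fun n => a (n + 1)) (fun n => b (n + 1) + if n = 0 then -ℓ 1 else 0) i j -
        if i = j then c else 0) =
      mprod (unitLowerBidiagonal fun n => ℓ (n + 1)) (upperBidiagonal fun n => β (n + 1)) i j := by
  obtain ⟨-, hsucc⟩ := jacobi_sub_eq_lower_mul_upper_iff.1 h
  refine jacobi_sub_eq_lower_mul_upper_iff.2 ⟨?_, fun n => ⟨?_, (hsucc (n + 1)).2⟩⟩ i j
  · simp [(hsucc 0).1]
  · simp [(hsucc (n + 1)).1]

lemma jacobi_tail_sub_eq_upper_mul_lower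
    (h : ∀ i j, (jacobi a b i j - if i = j then c else 0) =
      mprod (upperBidiagonal β) (unitLowerBidiagonal ℓ) i j) :
    ∀ i j, (jacobi (fun n => a (n + 1)) (fun n => b (n + 1)) i j - if i = j then c else 0) =
      mprod (upperBidiagonal fun n => β (n + 1)) (unitLowerBidiagonal fun n => ℓ (n + 1)) i j :=
  jacobi_sub_eq_upper_mul_lower_iff.2 fun n => jacobi_sub_eq_upper_mul_lower_iff.1 h (n + 1)

end Bidiagonal

section Darboux

variable {P Q : ℕ → ℂ[X]} {a b ℓ β : ℕ → ℂ} {c : ℂ}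

lemma HasTTRR.eq_add_C_mul_of_lower_mul_upper (hP : HasTTRR P a b)
    (hLU : ∀ i j, (jacobi a b i j - if i = j then c else 0) =
      mprod (unitLowerBidiagonal ℓ) (upperBidiagonal β) i j)
    (hQ : ∀ n, (X - C c) * Q n = P (n + 1) + C (β n) * P n) (n : ℕ) :
    P (n + 1) = Q (n + 1) + C (ℓ (n + 1)) * Q n := by
  obtain ⟨hb, ha⟩ := (jacobi_sub_eq_lower_mul_upper_iff.1 hLU).2 n
  have hrec := hP.2.2 (n + 1) n.succ_pos
  rw [Nat.add_sub_cancel, hb, ha, C_add, C_add, C_mul] at hrec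
  refine mul_left_cancel₀ (X_sub_C_ne_zero c) ?_
  linear_combination hrec - hQ (n + 1) - C (ℓ (n + 1)) * hQ n

theorem HasTTRR.darboux (hP : HasTTRR P a b)
    (hLU : ∀ i j, (jacobi a b i j - if i = j then c else 0) =
      mprod (unitLowerBidiagonal ℓ) (upperBidiagonal β) i j)
    (hQ : ∀ n, (X - C c) * Q n = P (n + 1) + C (β n) * P n) :
    HasTTRR Q (fun n => ℓ n * β n) fun n => c + β n + ℓ (n + 1) := by
  have hconn := hP.eq_add_C_mul_of_lower_mul_upper hLU hQ
  have hQ₀ : Q 0 = 1 := by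
    have hb₀ := (jacobi_sub_eq_lower_mul_upper_iff.1 hLU).1
    have hrec := hP.2.1
    rw [hb₀, C_add] at hrec
    refine mul_left_cancel₀ (X_sub_C_ne_zero c) ?_
    linear_combination hQ 0 - hrec + (X - C c) * hP.1
  refine ⟨hQ₀, ?_, fun n hn => ?_⟩
  · rw [C_add, C_add]
    linear_combination hQ 0 + hconn 0 + C (β 0) * (hP.1 - hQ₀)
  · obtain ⟨m, rfl⟩ := Nat.exists_eq_add_of_le' hn
    rw [Nat.add_sub_cancel, C_add, C_add, C_mul]
    linear_combination hQ (m + 1) + hconn (m + 1) + C (β (m + 1)) * hconn m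

lemma HasTTRR.corecursive_parameter_eq_neg {u : ℕ → ℂ} (hP : HasTTRR P a b)
    (horth : momentFunctional u (P 1 * P 0) = 0) (hu : u 1 - c * u 0 ≠ 0)
    (hLU : ∀ i j, (jacobi a b i j - if i = j then c else 0) =
      mprod (unitLowerBidiagonal ℓ) (upperBidiagonal β) i j) :
    -(a 1) * u 0 / (u 1 - c * u 0) = -ℓ 1 := by
  obtain ⟨hb₀, hsucc⟩ := jacobi_sub_eq_lower_mul_upper_iff.1 hLU
  have hu_eq : u 1 - c * u 0 = β 0 * u 0 := by
    rw [hP.moment_one horth, hb₀]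
    ring
  rw [div_eq_iff hu, hu_eq, (hsucc 0).2]
  ring

end Darboux

/-- deleting the first row and column of the Christoffel LU factors of
`J - cI` gives LU factors of `J_α - cI`, and `J̃^{(1)} - cI = U₁·L₁`. -/
theorem stmt_14 (u : ℕ → ℂ) (c : ℂ) (P : ℕ → Polynomial ℂ) (hP : IsSMOP u P)
    (a b : ℕ → ℂ) (hrec : HasTTRR P a b) (ha : ∀ n, 1 ≤ n → a n ≠ 0)
    (hc : ∀ n, (P n).eval c ≠ 0)
    (ut : ℕ → ℂ) (hut : ∀ n, ut n = u (n + 1) - c * u n) (hut0 : ut 0 ≠ 0)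
    (Pt : ℕ → Polynomial ℂ) (hPt : IsSMOP ut Pt)
    (at_ bt : ℕ → ℂ) (hrect : HasTTRR Pt at_ bt)
    (ell beta : ℕ → ℂ)
    (hell : ∀ n, 1 ≤ n → ell n = -((P (n - 1)).eval c / (P n).eval c)
        * (fapply u (P n * P n) / fapply u (P (n - 1) * P (n - 1))))
    (hbeta : ∀ n, beta n = -((P (n + 1)).eval c / (P n).eval c))
    (L U : ℕ → ℕ → ℂ)
    (hL : ∀ i j, L i j = if i = j then 1 else if i = j + 1 then ell i else 0)
    (hU : ∀ i j, U i j = if j = i then beta i else if j = i + 1 then 1 else 0)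
    (hLU : ∀ i j, (jacobi a b i j - if i = j then c else 0) = mprod L U i j)
    (L1 U1 : ℕ → ℕ → ℂ)
    (hL1 : ∀ i j, L1 i j = if i = j then 1 else if i = j + 1 then ell (i + 1) else 0)
    (hU1 : ∀ i j, U1 i j = if j = i then beta (i + 1) else if j = i + 1 then 1 else 0)
    (Jα : ℕ → ℕ → ℂ)
    (hJα : ∀ i j, Jα i j = jacobi (fun n => a (n + 1))
        (fun n => b (n + 1) + if n = 0 then -(a 1) * u 0 / ut 0 else 0) i j) :
    (∀ i j, (Jα i j - if i = j then c else 0) = mprod L1 U1 i j)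
    ∧ (∀ i j, (jacobi (fun n => at_ (n + 1)) (fun n => bt (n + 1)) i j
        - if i = j then c else 0) = mprod U1 L1 i j) := by
  obtain rfl : L = unitLowerBidiagonal ell := funext₂ hL
  obtain rfl : U = upperBidiagonal beta := funext₂ hU
  obtain rfl : L1 = unitLowerBidiagonal fun n => ell (n + 1) := funext₂ hL1
  obtain rfl : U1 = upperBidiagonal fun n => beta (n + 1) := funext₂ hU1
  have hα : -(a 1) * u 0 / ut 0 = -ell 1 := by
    rw [hut] at hut0 ⊢
    exact hrec.corecursive_parameter_eq_neg
      (hP.momentFunctional_mul_eq_zero_of_ne one_ne_zero) hut0 hLU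
  have hchristoffel (n : ℕ) : (X - C c) * Pt n = P (n + 1) + C (beta n) * P n := by
    rw [hbeta, hP.christoffel_formula hPt hut (hc n)]
  have hJt : jacobi at_ bt = jacobi (fun n => ell n * beta n) fun n => c + beta n + ell (n + 1) :=
    hrect.jacobi_unique hPt.linearIndependent (hrec.darboux hLU hchristoffel)
  have hUL : ∀ i j, (jacobi at_ bt i j - if i = j then c else 0) =
      mprod (upperBidiagonal beta) (unitLowerBidiagonal ell) i j := by
    rw [hJt]
    exact jacobi_sub_eq_upper_mul_lower_iff.2 fun n => ⟨rfl, rfl⟩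
  refine ⟨fun i j => ?_, jacobi_tail_sub_eq_upper_mul_lower hUL⟩
  rw [hJα, hα]
  exact jacobi_tail_sub_eq_lower_mul_upper hLU i j
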